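/- arXiv:2404.12568 — 2 statements merged into one kernel-verified Lean document; each statement's English description precedes it below -/
import Mathlib

section
/- Assume (σ_min + σ_min,m+1)/2 < τ < (σ_max + σ_max,m+1)/2 and τ ≠ σᵢ for all 1 ≤ i ≤ N, and let r ∈ ℝ^{M+N} satisfy Π_m r = r. Set d_{m+1} = min_{m<i≤N} |σᵢ − τ|. Then for every j ∈ ℕ there exists w ∈ K_j(B_m, r) such that ‖B_m w + r‖ ≤ 2 · (1 − 2/(1 + (σ_max + τ)/d_{m+1}))^{⌊j/2⌋} · ‖r‖, where ⌊·⌋ denotes the integer part. -/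
open Matrix

noncomputable def vnorm {ι : Type*} [Fintype ι] (x : ι → ℝ) : ℝ :=
  Real.sqrt (∑ i, x i ^ 2)

noncomputable def Krylov {ι : Type*} [Fintype ι] [DecidableEq ι]
    (B : Matrix ι ι ℝ) (r : ι → ℝ) (j : ℕ) : Submodule ℝ (ι → ℝ) :=
  Submodule.span ℝ {x | ∃ i < j, x = (B ^ i) *ᵥ r}

/-!
The `m` deflated singular triplets span a subspace invariant under the shifted augmented matrix
`B`, so the projection `P` commutes with `B`, and an eigenvector of `P * B * P` not orthogonal to
`r = P *ᵥ r` projects to an eigenvector of `B` in the range of `P`. In singular coordinates its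
eigenvalue is `± σ i - τ` with `m ≤ i`, or `-τ`, the latter forced by the `M - N` extra left
singular vectors. All these eigenvalues have modulus in `[d, L]` with `d = dm1` and
`L = σmax + τ`, and a Chebyshev polynomial in `x ^ 2`, normalized at `0`, is at most
`2 * ((L - d) / (L + d)) ^ (j / 2)` there.
-/

section ResidualPolynomial

open Polynomial

lemma pow_div_two_le_eval_chebyshev_T {t : ℝ} (ht : 0 < t) (k : ℕ) :
    t ^ k / 2 ≤ (Chebyshev.T ℝ k).eval ((t + t⁻¹) / 2) := by
  have hexp : Real.exp ((k : ℤ) * Real.log t) = t ^ k := by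
    rw [Int.cast_natCast, Real.exp_nat_mul, Real.exp_log ht]
  rw [← Real.cosh_log ht, Chebyshev.T_real_cosh, Real.cosh_eq, hexp]
  have := Real.exp_pos (-((k : ℤ) * Real.log t))
  linarith

lemma exists_residual_polynomial_le_on_Icc {d L : ℝ} (hd : 0 < d) (hdL : d < L) (k : ℕ) :
    ∃ q : ℝ[X], q.natDegree ≤ k ∧ q.eval 0 = 1 ∧
      ∀ x ∈ Set.Icc (d ^ 2) (L ^ 2), |q.eval x| ≤ 2 * ((L - d) / (L + d)) ^ k := by
  have hsub : 0 < L - d := sub_pos.2 hdL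
  have hadd : 0 < L + d := by linarith
  have hsq : 0 < L ^ 2 - d ^ 2 := by nlinarith
  set t := (L + d) / (L - d) with ht
  have htpos : 0 < t := div_pos hadd hsub
  set y := (L ^ 2 + d ^ 2) / (L ^ 2 - d ^ 2) with hy
  have hty : (t + t⁻¹) / 2 = y := by
    rw [ht, hy, inv_div, sq_sub_sq]
    field_simp
    ring
  have hT : t ^ k / 2 ≤ (Chebyshev.T ℝ k).eval y := hty ▸ pow_div_two_le_eval_chebyshev_T htpos k
  have hTpos : 0 < (Chebyshev.T ℝ k).eval y := lt_of_lt_of_le (by positivity) hT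
  -- The affine map sends `[d ^ 2, L ^ 2]` onto `[-1, 1]` and `0` to `y`.
  refine ⟨C ((Chebyshev.T ℝ k).eval y)⁻¹ *
    (Chebyshev.T ℝ k).comp (C y - C (2 / (L ^ 2 - d ^ 2)) * X), ?_, ?_, ?_⟩
  · refine (natDegree_C_mul_le _ _).trans (natDegree_comp_le.trans ?_)
    rw [Chebyshev.natDegree_T, Int.natAbs_natCast]
    exact mul_le_of_le_one_right' (by compute_degree)
  · simp [hTpos.ne']
  · rintro x ⟨hdx, hxL⟩
    have hle : |y - 2 / (L ^ 2 - d ^ 2) * x| ≤ 1 := by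
      have : y - 2 / (L ^ 2 - d ^ 2) * x = (L ^ 2 + d ^ 2 - 2 * x) / (L ^ 2 - d ^ 2) := by
        rw [hy]
        ring
      rw [this, abs_le, le_div_iff₀ hsq, div_le_iff₀ hsq]
      constructor <;> linarith
    simp only [eval_mul, eval_C, eval_comp, eval_sub, eval_X, abs_mul]
    calc |((Chebyshev.T ℝ k).eval y)⁻¹| * |(Chebyshev.T ℝ k).eval (y - 2 / (L ^ 2 - d ^ 2) * x)|
        ≤ |((Chebyshev.T ℝ k).eval y)⁻¹| * 1 := by
          gcongr
          exact Chebyshev.abs_eval_T_real_le_one k hle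
      _ = ((Chebyshev.T ℝ k).eval y)⁻¹ := by rw [mul_one, abs_of_pos (inv_pos.2 hTpos)]
      _ ≤ (t ^ k / 2)⁻¹ := by gcongr
      _ = 2 * ((L - d) / (L + d)) ^ k := by rw [← inv_div (L + d), inv_pow, inv_div, div_eq_mul_inv]

lemma exists_residual_polynomial_le_of_abs {d L : ℝ} (hd : 0 < d) (hdL : d ≤ L) (k : ℕ) :
    ∃ p : ℝ[X], p.natDegree ≤ 2 * k ∧ p.eval 0 = 1 ∧
      ∀ x, d ≤ |x| → |x| ≤ L → |p.eval x| ≤ 2 * ((L - d) / (L + d)) ^ k := by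
  rcases hdL.eq_or_lt with rfl | hlt
  · refine ⟨(1 - C (d ^ 2)⁻¹ * X ^ 2) ^ k, ?_, by simp, fun x hdx hxd => ?_⟩
    · rw [mul_comm 2]
      exact natDegree_pow_le.trans (Nat.mul_le_mul_left k (by compute_degree))
    · have hx : x ^ 2 = d ^ 2 := by rw [← sq_abs x, le_antisymm hxd hdx]
      rcases k.eq_zero_or_pos with rfl | hk
      · norm_num
      · simp [hx, hd.ne', hk.ne']
  · obtain ⟨q, hdeg, hq0, hq⟩ := exists_residual_polynomial_le_on_Icc hd hlt k
    refine ⟨q.comp (X ^ 2), ?_, by simpa using hq0, fun x hdx hxL => ?_⟩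
    · rw [natDegree_comp, natDegree_X_pow, mul_comm]
      gcongr
    · rw [eval_comp, eval_pow, eval_X]
      refine hq _ ⟨?_, ?_⟩ <;> rw [← sq_abs x] <;> gcongr

end ResidualPolynomial

section Krylov

open Polynomial

variable {ι : Type*} [Fintype ι]

lemma vnorm_eq_norm_toLp (x : ι → ℝ) : vnorm x = ‖WithLp.toLp 2 x‖ := by
  simp [EuclideanSpace.norm_eq, vnorm]

variable [DecidableEq ι]

lemma vecMul_aeval_of_vecMul_eq_smul {R : Type*} [CommRing R] {C : Matrix ι ι R} {v : ι → R}
    {l : R} (h : v ᵥ* C = l • v) (p : R[X]) : v ᵥ* aeval C p = p.eval l • v := by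
  induction p using Polynomial.induction_on' with
  | add p q hp hq => simp only [map_add, vecMul_add, hp, hq, eval_add, add_smul]
  | monomial n a =>
    have hpow : v ᵥ* C ^ n = l ^ n • v := by
      induction n with
      | zero => simp
      | succ n ih => rw [pow_succ, ← vecMul_vecMul, ih, smul_vecMul, h, smul_smul, pow_succ]
    rw [aeval_monomial, eval_monomial, ← Algebra.smul_def, vecMul_smul, hpow, smul_smul]

lemma vnorm_aeval_mulVec_le {C : Matrix ι ι ℝ} (hC : C.IsSymm) {p : ℝ[X]} {c : ℝ} (hc : 0 ≤ c)
    {r : ι → ℝ} (h : ∀ (l : ℝ) (v : ι → ℝ), C *ᵥ v = l • v → v ⬝ᵥ r ≠ 0 → |p.eval l| ≤ c) :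
    vnorm (aeval C p *ᵥ r) ≤ c * vnorm r := by
  have hH : C.IsHermitian := by
    rw [IsHermitian, conjTranspose_eq_transpose_of_trivial, hC]
  let b := hH.eigenvectorBasis
  have inner_b (i : ι) (x : ι → ℝ) : inner ℝ (b i) (WithLp.toLp 2 x) = (b i).ofLp ⬝ᵥ x := by
    simp [EuclideanSpace.inner_eq_star_dotProduct, dotProduct_comm]
  have coeff_le (i : ι) : |(b i).ofLp ⬝ᵥ (aeval C p *ᵥ r)| ≤ c * |(b i).ofLp ⬝ᵥ r| := by
    have hb : C *ᵥ (b i).ofLp = hH.eigenvalues i • (b i).ofLp := hH.mulVec_eigenvectorBasis i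
    have hb' : (b i).ofLp ᵥ* C = hH.eigenvalues i • (b i).ofLp := by
      rw [← mulVec_transpose, hC, hb]
    rw [dotProduct_mulVec, vecMul_aeval_of_vecMul_eq_smul hb', smul_dotProduct, smul_eq_mul,
      abs_mul]
    by_cases hbr : (b i).ofLp ⬝ᵥ r = 0
    · simp [hbr]
    · gcongr
      exact h _ _ hb hbr
  rw [vnorm_eq_norm_toLp, vnorm_eq_norm_toLp]
  refine le_of_sq_le_sq ?_ (by positivity)
  rw [mul_pow, ← b.sum_sq_norm_inner_right, ← b.sum_sq_norm_inner_right, Finset.mul_sum]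
  refine Finset.sum_le_sum fun i _ => ?_
  rw [inner_b, inner_b, ← mul_pow, Real.norm_eq_abs, Real.norm_eq_abs]
  gcongr
  exact coeff_le i

lemma exists_mem_Krylov_mulVec_add_eq_aeval (C : Matrix ι ι ℝ) (r : ι → ℝ) {j : ℕ} {p : ℝ[X]}
    (hp : p.natDegree ≤ j) (hp0 : p.eval 0 = 1) :
    ∃ w ∈ Krylov C r j, C *ᵥ w + r = aeval C p *ᵥ r := by
  refine ⟨aeval C p.divX *ᵥ r, ?_, ?_⟩
  · rw [aeval_eq_sum_range, sum_mulVec]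
    refine Submodule.sum_mem _ fun i _ => ?_
    rw [smul_mulVec]
    by_cases hi : i < j
    · exact Submodule.smul_mem _ _ (Submodule.subset_span ⟨i, hi, rfl⟩)
    · rw [coeff_divX, coeff_eq_zero_of_natDegree_lt (by lia), zero_smul]
      exact Submodule.zero_mem _
  · conv_rhs => rw [← X_mul_divX_add p, coeff_zero_eq_eval_zero, hp0]
    simp [add_mulVec]

lemma exists_mem_Krylov_vnorm_le {C : Matrix ι ι ℝ} (hC : C.IsSymm) {r : ι → ℝ} {d L : ℝ}
    (hd : 0 < d) (hdL : d ≤ L)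
    (h : ∀ (l : ℝ) (v : ι → ℝ), C *ᵥ v = l • v → v ⬝ᵥ r ≠ 0 → d ≤ |l| ∧ |l| ≤ L) (j : ℕ) :
    ∃ w ∈ Krylov C r j, vnorm (C *ᵥ w + r) ≤ 2 * (1 - 2 / (1 + L / d)) ^ (j / 2) * vnorm r := by
  have hrate : 1 - 2 / (1 + L / d) = (L - d) / (L + d) := by
    have : L + d ≠ 0 := by linarith
    have : d + L ≠ 0 := by linarith
    field_simp
    ring
  have hrate_nonneg : 0 ≤ (L - d) / (L + d) := div_nonneg (by linarith) (by linarith)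
  obtain ⟨p, hdeg, hp0, hp⟩ := exists_residual_polynomial_le_of_abs hd hdL (j / 2)
  obtain ⟨w, hw, hres⟩ :=
    exists_mem_Krylov_mulVec_add_eq_aeval C r (hdeg.trans (Nat.mul_div_le j 2)) hp0
  refine ⟨w, hw, ?_⟩
  rw [hres, hrate]
  exact vnorm_aeval_mulVec_le hC (by positivity) fun l v hv hvr =>
    (h l v hv hvr).elim (hp l)

end Krylov

section Compression

variable {R ι : Type*} [CommRing R] [Fintype ι]

lemma exists_eigenvector_of_compression {P B : Matrix ι ι R} (hPT : P.IsSymm)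
    (hPP : IsIdempotentElem P) (hPB : Commute P B) {r v : ι → R} {l : R} (hr : P *ᵥ r = r)
    (hv : (P * B * P) *ᵥ v = l • v) (hvr : v ⬝ᵥ r ≠ 0) :
    ∃ z ≠ 0, P *ᵥ z = z ∧ B *ᵥ z = l • z := by
  have hcompr : P * B * P = B * P := by rw [hPB.eq, mul_assoc, hPP.eq]
  have hPBP : P * (B * P) = B * P := by rw [← mul_assoc, hcompr]
  refine ⟨P *ᵥ v, fun hPv => hvr ?_, ?_, ?_⟩
  · rw [← hr, dotProduct_mulVec, ← mulVec_transpose, hPT, hPv, zero_dotProduct]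
  · rw [mulVec_mulVec, hPP.eq]
  · rw [mulVec_mulVec, ← mulVec_smul, ← hv, mulVec_mulVec, hcompr, hPBP]

end Compression

section AugmentedMatrix

variable {R μ ν κ : Type*} [CommRing R] [DecidableEq μ] [DecidableEq ν]

/-- The augmented (Jordan–Wielandt) matrix of `A` shifted by `τ`, the paper's `B`. Its eigenvalues
are, up to sign and padding by zeros, the singular values of `A`, shifted by `-τ`. -/
def shiftedAugmented (τ : R) (A : Matrix μ ν R) : Matrix (μ ⊕ ν) (μ ⊕ ν) R :=
  fromBlocks ((-τ) • 1) A Aᵀ ((-τ) • 1)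

/-- The paper's `Π_m`: the projection onto the orthogonal complement of the columns of `U` in the
left block and of those of `V` in the right block. It is a projection when `U` and `V` have
orthonormal columns. -/
def deflation [Fintype κ] (U : Matrix μ κ R) (V : Matrix ν κ R) : Matrix (μ ⊕ ν) (μ ⊕ ν) R :=
  fromBlocks (1 - U * Uᵀ) 0 0 (1 - V * Vᵀ)

lemma isSymm_shiftedAugmented (τ : R) (A : Matrix μ ν R) : (shiftedAugmented τ A).IsSymm :=
  IsSymm.fromBlocks (isSymm_one.smul _) rfl (isSymm_one.smul _)

lemma isSymm_deflation [Fintype κ] (U : Matrix μ κ R) (V : Matrix ν κ R) :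
    (deflation U V).IsSymm :=
  IsSymm.fromBlocks (isSymm_one.sub (transpose_mul U Uᵀ)) (transpose_zero)
    (isSymm_one.sub (transpose_mul V Vᵀ))

variable [Fintype μ] [Fintype ν]

lemma shiftedAugmented_mulVec_eq_smul_iff {τ l : R} {A : Matrix μ ν R} {x : μ → R} {y : ν → R} :
    shiftedAugmented τ A *ᵥ Sum.elim x y = l • Sum.elim x y ↔
      A *ᵥ y = (l + τ) • x ∧ Aᵀ *ᵥ x = (l + τ) • y := by
  have hsmul : l • Sum.elim x y = Sum.elim (l • x) (l • y) := by
    ext (i | i) <;> rfl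
  rw [shiftedAugmented, fromBlocks_mulVec, hsmul, Sum.elim_eq_iff]
  simp only [Sum.elim_comp_inl, Sum.elim_comp_inr, smul_mulVec, one_mulVec]
  rw [neg_smul, neg_smul, neg_add_eq_iff_eq_add, ← sub_eq_add_neg, sub_eq_iff_eq_add, add_smul,
    add_smul, add_comm (τ • x)]

variable [Fintype κ]

lemma commute_deflation_shiftedAugmented {U : Matrix μ κ R} {V : Matrix ν κ R} {A : Matrix μ ν R}
    {D : Matrix κ κ R} (τ : R) (hAV : A * V = U * D) (hAU : Aᵀ * U = V * Dᵀ) :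
    Commute (deflation U V) (shiftedAugmented τ A) := by
  have hUA : Uᵀ * A = D * Vᵀ := by simpa using congrArg transpose hAU
  have hVA : Vᵀ * Aᵀ = Dᵀ * Uᵀ := by simpa using congrArg transpose hAV
  have hleft : U * Uᵀ * A = A * (V * Vᵀ) := by
    rw [Matrix.mul_assoc, hUA, ← Matrix.mul_assoc, ← hAV, Matrix.mul_assoc]
  have hright : V * Vᵀ * Aᵀ = Aᵀ * (U * Uᵀ) := by
    rw [Matrix.mul_assoc, hVA, ← Matrix.mul_assoc, ← hAU, Matrix.mul_assoc]
  simp [Commute, SemiconjBy, deflation, shiftedAugmented, fromBlocks_multiply, Matrix.sub_mul,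
    Matrix.mul_sub, hleft, hright]

variable [DecidableEq κ]

lemma isIdempotentElem_one_sub_mul_transpose {U : Matrix μ κ R} (hU : Uᵀ * U = 1) :
    IsIdempotentElem (1 - U * Uᵀ) := by
  refine IsIdempotentElem.one_sub ?_
  rw [IsIdempotentElem, Matrix.mul_assoc, ← Matrix.mul_assoc Uᵀ, hU, Matrix.one_mul]

lemma isIdempotentElem_deflation {U : Matrix μ κ R} {V : Matrix ν κ R} (hU : Uᵀ * U = 1)
    (hV : Vᵀ * V = 1) : IsIdempotentElem (deflation U V) := by
  simp [IsIdempotentElem, deflation, fromBlocks_multiply,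
    (isIdempotentElem_one_sub_mul_transpose hU).eq, (isIdempotentElem_one_sub_mul_transpose hV).eq]

lemma transpose_mulVec_eq_zero_of_one_sub_mulVec_eq {U : Matrix μ κ R} (hU : Uᵀ * U = 1)
    {x : μ → R} (hx : (1 - U * Uᵀ) *ᵥ x = x) : Uᵀ *ᵥ x = 0 := by
  rw [← hx, mulVec_mulVec, Matrix.mul_sub, Matrix.mul_one, ← Matrix.mul_assoc, hU, Matrix.one_mul,
    sub_self, zero_mulVec]

lemma transpose_mulVec_eq_zero_of_deflation_mulVec_eq {U : Matrix μ κ R} {V : Matrix ν κ R}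
    (hU : Uᵀ * U = 1) (hV : Vᵀ * V = 1) {x : μ → R} {y : ν → R}
    (h : deflation U V *ᵥ Sum.elim x y = Sum.elim x y) : Uᵀ *ᵥ x = 0 ∧ Vᵀ *ᵥ y = 0 := by
  simp only [deflation, fromBlocks_mulVec, Sum.elim_comp_inl, Sum.elim_comp_inr, zero_mulVec,
    add_zero, zero_add, Sum.elim_eq_iff] at h
  exact ⟨transpose_mulVec_eq_zero_of_one_sub_mulVec_eq hU h.1,
    transpose_mulVec_eq_zero_of_one_sub_mulVec_eq hV h.2⟩

end AugmentedMatrix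

section RectDiagonal

variable {R : Type*} {M N m : ℕ}

/-- The `M × N` matrix with diagonal `σ`, the paper's `Σ` when `N ≤ M`. -/
def rectDiagonal [Zero R] (M : ℕ) (σ : Fin N → R) : Matrix (Fin M) (Fin N) R :=
  of fun i j => if (i : ℕ) = j then σ j else 0

lemma vecMul_rectDiagonal [NonUnitalNonAssocSemiring R] (hNM : N ≤ M) (σ : Fin N → R)
    (x : Fin M → R) (j : Fin N) :
    (x ᵥ* rectDiagonal M σ) j = x (Fin.castLE hNM j) * σ j := by
  rw [vecMul, dotProduct, Finset.sum_eq_single (Fin.castLE hNM j)]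
  · simp [rectDiagonal]
  · intro i _ hij
    have : (i : ℕ) ≠ j := fun h => hij (Fin.ext h)
    simp [rectDiagonal, this]
  · simp

lemma rectDiagonal_mulVec [NonUnitalNonAssocSemiring R] (σ : Fin N → R) (y : Fin N → R)
    (i : Fin M) :
    (rectDiagonal M σ *ᵥ y) i = if h : (i : ℕ) < N then σ ⟨i, h⟩ * y ⟨i, h⟩ else 0 := by
  split_ifs with h
  · rw [mulVec, dotProduct, Finset.sum_eq_single ⟨i, h⟩]
    · simp [rectDiagonal]
    · intro j _ hij
      have : (i : ℕ) ≠ j := fun h => hij (Fin.ext h.symm)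
      simp [rectDiagonal, this]
    · simp
  · rw [mulVec, dotProduct]
    refine Finset.sum_eq_zero fun j _ => ?_
    have : (i : ℕ) ≠ j := by lia
    simp [rectDiagonal, this]

lemma mul_rectDiagonal_submatrix_castLE [NonUnitalNonAssocSemiring R] {μ : Type*}
    (hNM : N ≤ M) (hmN : m ≤ N) (X : Matrix μ (Fin M) R) (σ : Fin N → R) :
    (X * rectDiagonal M σ).submatrix id (Fin.castLE hmN) =
      X.submatrix id (Fin.castLE (hmN.trans hNM)) * diagonal (σ ∘ Fin.castLE hmN) := by
  ext i j
  simp [mul_apply_eq_vecMul, vecMul_rectDiagonal hNM]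

lemma mul_rectDiagonal_transpose_submatrix_castLE [NonUnitalCommSemiring R] {μ : Type*}
    (hNM : N ≤ M) (hmN : m ≤ N) (X : Matrix μ (Fin N) R) (σ : Fin N → R) :
    (X * (rectDiagonal M σ)ᵀ).submatrix id (Fin.castLE (hmN.trans hNM)) =
      X.submatrix id (Fin.castLE hmN) * diagonal (σ ∘ Fin.castLE hmN) := by
  ext i j
  have : (j : ℕ) < N := by lia
  simp [mul_apply_eq_vecMul, vecMul_transpose, rectDiagonal_mulVec, this, mul_comm, Fin.castLE]

lemma sq_eq_sq_or_eq_zero_of_rectDiagonal_singular_pair [CommRing R] [NoZeroDivisors R]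
    (hNM : N ≤ M) {σ : Fin N → R} {a : Fin M → R} {b : Fin N → R} {l : R} (hab : Sum.elim a b ≠ 0)
    (ha0 : ∀ i : Fin M, (i : ℕ) < m → a i = 0) (hb0 : ∀ i : Fin N, (i : ℕ) < m → b i = 0)
    (ha : rectDiagonal M σ *ᵥ b = l • a) (hb : a ᵥ* rectDiagonal M σ = l • b) :
    (∃ i : Fin N, m ≤ i ∧ l ^ 2 = σ i ^ 2) ∨ (N < M ∧ l = 0) := by
  have ha' (i : Fin N) : σ i * b i = l * a (Fin.castLE hNM i) := by
    simpa [rectDiagonal_mulVec] using congrFun ha (Fin.castLE hNM i)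
  have hb' (i : Fin N) : a (Fin.castLE hNM i) * σ i = l * b i := by
    simpa [vecMul_rectDiagonal hNM] using congrFun hb i
  obtain ⟨i | i, hi⟩ := Function.ne_iff.1 hab
  · have him : m ≤ i := not_lt.1 fun h => hi (ha0 i h)
    by_cases hiN : (i : ℕ) < N
    · have hai := ha' ⟨i, hiN⟩
      have hbi := hb' ⟨i, hiN⟩
      refine .inl ⟨⟨i, hiN⟩, him, mul_right_cancel₀ hi ?_⟩
      simp only [Fin.castLE_mk, Fin.eta, Sum.elim_inl] at hai hbi ⊢
      linear_combination -l * hai - σ ⟨i, hiN⟩ * hbi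
    · have hai := congrFun ha i
      simp only [rectDiagonal_mulVec, hiN, dite_false, Pi.smul_apply, smul_eq_mul] at hai
      exact .inr ⟨by lia, (mul_eq_zero.1 hai.symm).resolve_right hi⟩
  · refine .inl ⟨i, not_lt.1 fun h => hi (hb0 i h), mul_right_cancel₀ hi ?_⟩
    simp only [Sum.elim_inr]
    linear_combination -l * hb' i - σ i * ha' i

end RectDiagonal

lemma transpose_mul_self_submatrix_eq_one {R μ ν κ : Type*} [NonAssocSemiring R] [Fintype μ]
    [DecidableEq ν] [DecidableEq κ] {V : Matrix μ ν R} (hV : Vᵀ * V = 1) {f : κ → ν}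
    (hf : Function.Injective f) : (V.submatrix id f)ᵀ * V.submatrix id f = 1 := by
  rw [← submatrix_one f hf, ← hV, submatrix_mul _ _ f id f Function.bijective_id,
    transpose_submatrix]

section SingularValueDecomposition

variable {R : Type*} [CommRing R] {M N m : ℕ} {A : Matrix (Fin M) (Fin N) R}
  {U : Matrix (Fin M) (Fin M) R} {V : Matrix (Fin N) (Fin N) R} {σ : Fin N → R}

lemma commute_deflation_shiftedAugmented_of_svd (hNM : N ≤ M) (hmN : m ≤ N) (hU : Uᵀ * U = 1)
    (hV : Vᵀ * V = 1) (hA : A = U * rectDiagonal M σ * Vᵀ) (τ : R) :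
    Commute (deflation (U.submatrix id (Fin.castLE (hmN.trans hNM)))
      (V.submatrix id (Fin.castLE hmN))) (shiftedAugmented τ A) := by
  have hAV : A * V = U * rectDiagonal M σ := by rw [hA, Matrix.mul_assoc, hV, Matrix.mul_one]
  have hAU : Aᵀ * U = V * (rectDiagonal M σ)ᵀ := by
    simp [hA, Matrix.mul_assoc, hU]
  refine commute_deflation_shiftedAugmented (D := diagonal (σ ∘ Fin.castLE hmN)) τ ?_ ?_
  · rw [← mul_rectDiagonal_submatrix_castLE hNM hmN, ← hAV]
    rfl
  · rw [diagonal_transpose, ← mul_rectDiagonal_transpose_submatrix_castLE hNM hmN, ← hAU]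
    rfl

lemma deflated_eigenvalue_of_svd [NoZeroDivisors R] (hNM : N ≤ M) (hmN : m ≤ N) (hU : Uᵀ * U = 1)
    (hV : Vᵀ * V = 1) (hA : A = U * rectDiagonal M σ * Vᵀ) {τ l : R} {z : Fin M ⊕ Fin N → R}
    (hz : z ≠ 0)
    (hPz : deflation (U.submatrix id (Fin.castLE (hmN.trans hNM)))
      (V.submatrix id (Fin.castLE hmN)) *ᵥ z = z)
    (hBz : shiftedAugmented τ A *ᵥ z = l • z) :
    (∃ i : Fin N, m ≤ i ∧ (l + τ) ^ 2 = σ i ^ 2) ∨ (N < M ∧ l + τ = 0) := by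
  obtain ⟨x, y, rfl⟩ : ∃ x y, z = Sum.elim x y := ⟨_, _, (Sum.elim_comp_inl_inr z).symm⟩
  obtain ⟨hAy, hAx⟩ := shiftedAugmented_mulVec_eq_smul_iff.1 hBz
  obtain ⟨hUx, hVy⟩ := transpose_mulVec_eq_zero_of_deflation_mulVec_eq
    (transpose_mul_self_submatrix_eq_one hU (Fin.castLE_injective _))
    (transpose_mul_self_submatrix_eq_one hV (Fin.castLE_injective _)) hPz
  have hx : U *ᵥ (Uᵀ *ᵥ x) = x := by rw [mulVec_mulVec, mul_eq_one_comm.1 hU, one_mulVec]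
  have hy : V *ᵥ (Vᵀ *ᵥ y) = y := by rw [mulVec_mulVec, mul_eq_one_comm.1 hV, one_mulVec]
  refine sq_eq_sq_or_eq_zero_of_rectDiagonal_singular_pair (a := Uᵀ *ᵥ x) (b := Vᵀ *ᵥ y) hNM
    (fun h => hz ?_) (fun i hi => congrFun hUx ⟨i, hi⟩) (fun i hi => congrFun hVy ⟨i, hi⟩) ?_ ?_
  · obtain ⟨ha, hb⟩ : Uᵀ *ᵥ x = 0 ∧ Vᵀ *ᵥ y = 0 :=
      Sum.elim_eq_iff.1 (h.trans Sum.elim_zero_zero.symm)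
    rw [← hx, ← hy, ha, hb, mulVec_zero, mulVec_zero, Sum.elim_zero_zero]
  · rw [← mulVec_smul, ← hAy, hA]
    simp only [mulVec_mulVec, ← Matrix.mul_assoc, hU, Matrix.one_mul]
  · rw [← mulVec_transpose, ← mulVec_smul, ← hAx, hA]
    simp only [transpose_mul, transpose_transpose, mulVec_mulVec, ← Matrix.mul_assoc, hV,
      Matrix.one_mul]

end SingularValueDecomposition

lemma abs_sub_le_and_abs_le_add_of_sq_eq {s τ l : ℝ} (hs : 0 ≤ s) (hτ : 0 ≤ τ)
    (h : (l + τ) ^ 2 = s ^ 2) : |s - τ| ≤ |l| ∧ |l| ≤ s + τ := by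
  rcases sq_eq_sq_iff_eq_or_eq_neg.1 h with h | h
  · obtain rfl : l = s - τ := by linarith
    exact ⟨le_rfl, abs_le.2 ⟨by linarith, by linarith⟩⟩
  · obtain rfl : l = -(s + τ) := by linarith
    rw [abs_neg, abs_of_nonneg (add_nonneg hs hτ)]
    exact ⟨abs_le.2 ⟨by linarith, by linarith⟩, le_rfl⟩

lemma pos_of_isLeast_abs_sub {ι : Type*} {σ : ι → ℝ} {τ d : ℝ} {s : Set ι}
    (hd : IsLeast ((fun i => |σ i - τ|) '' s) d) (hτ : ∀ i, τ ≠ σ i) : 0 < d := by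
  obtain ⟨i, -, rfl⟩ := hd.1
  exact abs_pos.2 (sub_ne_zero.2 (hτ i).symm)

lemma le_shift_of_isLeast_abs_sub {ι : Type*} {σ : ι → ℝ} (hσ : ∀ i, 0 ≤ σ i)
    {τ d a b : ℝ} {s : Set ι} (hd : IsLeast ((fun i => |σ i - τ|) '' s) d)
    (ha : IsLeast (Set.range σ) a) (hb : IsLeast (σ '' s) b) (hτ : (a + b) / 2 < τ) : d ≤ τ := by
  obtain ⟨k, rfl⟩ := ha.1
  obtain ⟨i, his, rfl⟩ := hb.1
  have hk := hσ k
  have hi := hσ i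
  exact (hd.2 ⟨i, his, rfl⟩).trans (abs_le.2 ⟨by linarith, by linarith⟩)

theorem minres_bound_precond_exact_interior_general {M N m : ℕ} (hNM : N ≤ M) (hmN : m ≤ N)
    {A : Matrix (Fin M) (Fin N) ℝ} {U : Matrix (Fin M) (Fin M) ℝ}
    {V : Matrix (Fin N) (Fin N) ℝ} (hU : Uᵀ * U = 1) (hV : Vᵀ * V = 1)
    {σ : Fin N → ℝ} (hσ : ∀ i, 0 ≤ σ i) (hA : A = U * rectDiagonal M σ * Vᵀ)
    {τ : ℝ} (hτ0 : 0 ≤ τ)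
    {σmax : ℝ} (hσmax : IsGreatest (Set.range σ) σmax)
    {d : ℝ} (hd : IsLeast ((fun i => |σ i - τ|) '' {i : Fin N | m ≤ (i : ℕ)}) d)
    (hd0 : 0 < d) (hdτ : N < M → d ≤ τ)
    {Um : Matrix (Fin M) (Fin m) ℝ} (hUm : Um = U.submatrix id (Fin.castLE (hmN.trans hNM)))
    {Vm : Matrix (Fin N) (Fin m) ℝ} (hVm : Vm = V.submatrix id (Fin.castLE hmN))
    {r : Fin M ⊕ Fin N → ℝ} (hr : deflation Um Vm *ᵥ r = r) (j : ℕ) :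
    ∃ w ∈ Krylov (deflation Um Vm * shiftedAugmented τ A * deflation Um Vm) r j,
      vnorm ((deflation Um Vm * shiftedAugmented τ A * deflation Um Vm) *ᵥ w + r) ≤
        2 * (1 - 2 / (1 + (σmax + τ) / d)) ^ (j / 2) * vnorm r := by
  subst hUm hVm
  set P := deflation (U.submatrix id (Fin.castLE (hmN.trans hNM))) (V.submatrix id (Fin.castLE hmN))
  have hPT : P.IsSymm := isSymm_deflation _ _
  have hPP : IsIdempotentElem P := isIdempotentElem_deflation
    (transpose_mul_self_submatrix_eq_one hU (Fin.castLE_injective _))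
    (transpose_mul_self_submatrix_eq_one hV (Fin.castLE_injective _))
  have hPB : Commute P (shiftedAugmented τ A) :=
    commute_deflation_shiftedAugmented_of_svd hNM hmN hU hV hA τ
  have hsymm : (P * shiftedAugmented τ A * P).IsSymm := by
    rw [IsSymm, transpose_mul, transpose_mul, hPT, isSymm_shiftedAugmented, Matrix.mul_assoc]
  have hσle (i : Fin N) : σ i + τ ≤ σmax + τ := by grw [hσmax.2 ⟨i, rfl⟩]
  have hdL : d ≤ σmax + τ := by
    obtain ⟨i, -, rfl⟩ := hd.1
    exact (abs_le.2 ⟨by linarith [hσ i], by linarith⟩).trans (hσle i)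
  have hσmax0 : 0 ≤ σmax := by
    obtain ⟨i, rfl⟩ := hσmax.1
    exact hσ i
  refine exists_mem_Krylov_vnorm_le hsymm hd0 hdL (fun l v hv hvr => ?_) j
  obtain ⟨z, hz, hPz, hBz⟩ := exists_eigenvector_of_compression hPT hPP hPB hr hv hvr
  rcases deflated_eigenvalue_of_svd hNM hmN hU hV hA hz hPz hBz with ⟨i, hi, hl⟩ | ⟨hlt, hl⟩
  · obtain ⟨hlow, hupp⟩ := abs_sub_le_and_abs_le_add_of_sq_eq (hσ i) hτ0 hl
    exact ⟨(hd.2 ⟨i, hi, rfl⟩).trans hlow, hupp.trans (hσle i)⟩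
  · rw [eq_neg_of_add_eq_zero_left hl, abs_neg, abs_of_nonneg hτ0]
    exact ⟨hdτ hlt, le_add_of_nonneg_left hσmax0⟩

/-- Theorem 4.2(iii). MINRES bound for the preconditioned JDSVD
correction equation with exact singular subspaces, in the interior case. -/
theorem minres_bound_precond_exact_interior {M N m : ℕ} (hN : 2 ≤ N) (hMN : N ≤ M)
    (hm : 1 ≤ m) (hmN : m < N)
    (A : Matrix (Fin M) (Fin N) ℝ)
    (U : Matrix (Fin M) (Fin M) ℝ) (V : Matrix (Fin N) (Fin N) ℝ)
    (hU : Uᵀ * U = 1) (hV : Vᵀ * V = 1)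
    (σ : Fin N → ℝ) (hσ : ∀ i, 0 ≤ σ i)
    (S : Matrix (Fin M) (Fin N) ℝ)
    (hS : ∀ i j, S i j = if (i : ℕ) = (j : ℕ) then σ j else 0)
    (hA : A = U * S * Vᵀ)
    (τ : ℝ) (hτ0 : 0 ≤ τ)
    (hclosest : ∀ i j : Fin N, (i : ℕ) < m → m ≤ (j : ℕ) → |σ i - τ| ≤ |σ j - τ|)
    (hτσ : ∀ i : Fin N, τ ≠ σ i)
    (σmax σmaxm1 σmin σminm1 : ℝ)
    (hσmax : IsGreatest (Set.range σ) σmax)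
    (hσmaxm1 : IsGreatest (σ '' {i : Fin N | m ≤ (i : ℕ)}) σmaxm1)
    (hσmin : IsLeast (Set.range σ) σmin)
    (hσminm1 : IsLeast (σ '' {i : Fin N | m ≤ (i : ℕ)}) σminm1)
    (hτ1 : (σmin + σminm1) / 2 < τ) (hτ2 : τ < (σmax + σmaxm1) / 2)
    (dm1 : ℝ)
    (hdm1 : IsLeast ((fun i => |σ i - τ|) '' {i : Fin N | m ≤ (i : ℕ)}) dm1)
    (Um : Matrix (Fin M) (Fin m) ℝ)
    (hUm : ∀ i j, Um i j = U i ⟨(j : ℕ), by have := j.isLt; omega⟩)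
    (Vm : Matrix (Fin N) (Fin m) ℝ)
    (hVm : ∀ i j, Vm i j = V i ⟨(j : ℕ), by have := j.isLt; omega⟩)
    (B P Bm : Matrix (Fin M ⊕ Fin N) (Fin M ⊕ Fin N) ℝ)
    (hB : B = Matrix.fromBlocks ((-τ) • 1) A Aᵀ ((-τ) • 1))
    (hP : P = Matrix.fromBlocks (1 - Um * Umᵀ) 0 0 (1 - Vm * Vmᵀ))
    (hBm : Bm = P * B * P)
    (r : Fin M ⊕ Fin N → ℝ) (hr : P *ᵥ r = r) :
    ∀ j : ℕ, ∃ w ∈ Krylov Bm r j,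
      vnorm (Bm *ᵥ w + r) ≤
        2 * (1 - 2 / (1 + (σmax + τ) / dm1)) ^ (j / 2) * vnorm r := by
  subst hBm hB hP
  exact minres_bound_precond_exact_interior_general hMN hmN.le hU hV hσ
    (by rw [hA, (Matrix.ext hS : S = rectDiagonal M σ)]) hτ0 hσmax hdm1
    (pos_of_isLeast_abs_sub hdm1 hτσ)
    (fun _ => le_shift_of_isLeast_abs_sub hσ hdm1 hσmin hσminm1 hτ1)
    (Matrix.ext hUm) (Matrix.ext hVm) hr
end

section
/- Assume τ > (σ_max + σ_max,m+1)/2 and δ < τ − σ_max,m+1, and let r ∈ ℝ^{M+N} satisfy Π̃_m r = r. Then for every j ∈ ℕ there exists w ∈ K_j(B̃_m, r) such that ‖B̃_m w + r‖ ≤ 2 · (1 − 2/(1 + √((τ + σ_max,m+1 + δ)/(τ − σ_max,m+1 − δ))))^j · ‖r‖. -/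
open Matrix

noncomputable def specNorm {ι κ : Type*} [Fintype ι] [Fintype κ] [DecidableEq κ]
    (A : Matrix ι κ ℝ) : ℝ :=
  ‖LinearMap.toContinuousLinearMap (Matrix.toEuclideanLin A)‖

/-!
On the range of the projection `P` the preconditioned matrix is `G - τ`, where `G` has the
off-diagonal blocks `C` and `Cᴴ` for the compression `C` of `A`. Splitting off the leading singular
triplets of `A`, the compression sees the remainder with norm at most `σ_max,m+1` and the leading
part only through the sines of both subspace angles, so `‖G‖ ≤ g := σ_max,m+1 + δ < τ`. The spectrum
of `G` therefore lies in `[-g, g]`, where the residual polynomial `T_j(t / g) / T_j(τ / g)` is at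
most `1 / T_j(τ / g)` in absolute value. As `τ / g = (q + q⁻¹) / 2` for `q` the Chebyshev rate of
`(τ + g) / (τ - g)`, this is `2 / (q ^ j + q⁻¹ ^ j) ≤ 2 * q ^ j`.
-/

/-- The factor `(√κ - 1) / (√κ + 1)` per step in the Chebyshev residual bound for condition
number `κ`, in the form in which the MINRES bound displays it. -/
noncomputable def chebyshevRate (κ : ℝ) : ℝ := 1 - 2 / (1 + √κ)

section Chebyshev

open Polynomial

theorem eval_T_half_add_inv {q : ℝ} (hq : 0 < q) (n : ℕ) :
    (Chebyshev.T ℝ n).eval ((q + q⁻¹) / 2) = (q ^ n + (q ^ n)⁻¹) / 2 := by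
  rw [← Real.cosh_log hq, Chebyshev.T_real_cosh, Int.cast_natCast, ← Real.log_pow,
    Real.cosh_log (pow_pos hq n)]

variable {τ g : ℝ}

theorem chebyshevRate_pos (hg : 0 < g) (hgτ : g < τ) :
    0 < chebyshevRate ((τ + g) / (τ - g)) := by
  have hsqrt : 1 < √((τ + g) / (τ - g)) := by
    rw [Real.lt_sqrt zero_le_one, one_pow, one_lt_div (by linarith)]
    linarith
  rw [chebyshevRate, sub_pos, div_lt_one (by linarith)]
  linarith

theorem chebyshevRate_add_inv (hg : 0 < g) (hgτ : g < τ) :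
    (chebyshevRate ((τ + g) / (τ - g)) + (chebyshevRate ((τ + g) / (τ - g)))⁻¹) / 2 = τ / g := by
  have hrate := chebyshevRate_pos hg hgτ
  have hsq : √((τ + g) / (τ - g)) ^ 2 * (τ - g) = τ + g := by
    rw [Real.sq_sqrt (div_nonneg (by linarith) (by linarith)),
      div_mul_cancel₀ _ (sub_pos.mpr hgτ).ne']
  rw [chebyshevRate] at hrate ⊢
  set x := √((τ + g) / (τ - g))
  have hx : x + 1 ≠ 0 := by positivity
  have hrate_eq : 1 - 2 / (1 + x) = (x - 1) / (x + 1) := by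
    rw [add_comm 1 x]
    field_simp
    ring
  rw [hrate_eq] at hrate ⊢
  have hx' : x - 1 ≠ 0 := (div_ne_zero_iff.mp hrate.ne').1
  rw [inv_div]
  field_simp
  linear_combination (-2 : ℝ) * hsq

theorem one_le_two_mul_chebyshevRate_pow_mul_eval_T (hg : 0 < g) (hgτ : g < τ) (j : ℕ) :
    1 ≤ 2 * chebyshevRate ((τ + g) / (τ - g)) ^ j * (Chebyshev.T ℝ j).eval (τ / g) := by
  have hrate := chebyshevRate_pos hg hgτ
  rw [← chebyshevRate_add_inv hg hgτ, eval_T_half_add_inv hrate]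
  set q := chebyshevRate ((τ + g) / (τ - g)) ^ j
  have hq : 0 < q := pow_pos hrate j
  calc (1 : ℝ) ≤ q ^ 2 + 1 := le_add_of_nonneg_left (sq_nonneg q)
    _ = 2 * q * ((q + q⁻¹) / 2) := by field_simp

theorem exists_polynomial_eval_eq_one_abs_eval_le (hg : 0 ≤ g) (hgτ : g < τ) (j : ℕ) :
    ∃ f : ℝ[X], f.natDegree ≤ j ∧ f.eval τ = 1 ∧ ∀ t, |t| ≤ g →
      |f.eval t| ≤ 2 * chebyshevRate ((τ + g) / (τ - g)) ^ j := by
  have hτ : 0 < τ := hg.trans_lt hgτ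
  rcases hg.eq_or_lt with rfl | hg
  · refine ⟨C (τ⁻¹ ^ j) * X ^ j, natDegree_C_mul_X_pow_le _ _, ?_, fun t ht => ?_⟩
    · simp [hτ.ne']
    · obtain rfl : t = 0 := abs_nonpos_iff.mp ht
      rcases j.eq_zero_or_pos with rfl | hj
      · simp
      · simp [chebyshevRate, hj.ne', hτ.ne', one_add_one_eq_two]
  set T := Chebyshev.T ℝ j
  have hT := one_le_two_mul_chebyshevRate_pow_mul_eval_T hg hgτ j
  have hTpos : 0 < T.eval (τ / g) :=
    pos_of_mul_pos_right (zero_lt_one.trans_le hT)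
      (mul_nonneg zero_le_two (pow_nonneg (chebyshevRate_pos hg hgτ).le j))
  have heval (t : ℝ) : (C (T.eval (τ / g))⁻¹ * T.comp (C g⁻¹ * X)).eval t =
      T.eval (t / g) / T.eval (τ / g) := by
    simp only [eval_mul, eval_C, eval_comp, eval_X, inv_mul_eq_div]
  refine ⟨C (T.eval (τ / g))⁻¹ * T.comp (C g⁻¹ * X), ?_, ?_, fun t ht => ?_⟩
  · calc _ ≤ T.natDegree * (C g⁻¹ * X).natDegree :=
          (natDegree_C_mul_le _ _).trans natDegree_comp_le
      _ ≤ j * 1 := Nat.mul_le_mul (Chebyshev.natDegree_T ℝ (j : ℤ)).le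
          ((natDegree_C_mul_le _ _).trans natDegree_X_le)
      _ = j := mul_one j
  · rw [heval, div_self hTpos.ne']
  · rw [heval, abs_div, abs_of_pos hTpos, div_le_iff₀ hTpos]
    refine (Chebyshev.abs_eval_T_real_le_one j ?_).trans hT
    rwa [abs_div, abs_of_pos hg, div_le_one hg]

end Chebyshev

section Matrix

variable {R ι κ μ ρ : Type*}

theorem isStarProjection_one_sub_mul_conjTranspose [Ring R] [StarRing R] [Fintype ι] [Fintype κ]
    [DecidableEq ι] [DecidableEq κ] {Q : Matrix ι κ R} (hQ : Qᴴ * Q = 1) :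
    IsStarProjection (1 - Q * Qᴴ) := by
  refine IsStarProjection.one_sub ⟨?_, isHermitian_mul_conjTranspose_self Q⟩
  rw [IsIdempotentElem, Matrix.mul_assoc, ← Matrix.mul_assoc Qᴴ, hQ, Matrix.one_mul]

theorem conjTranspose_submatrix_mul_submatrix [Semiring R] [StarRing R] [Fintype ι] [DecidableEq μ]
    [DecidableEq ρ] {U : Matrix ι ρ R} (hU : Uᴴ * U = 1) {f : μ → ρ} (hf : f.Injective) :
    (U.submatrix id f)ᴴ * U.submatrix id f = 1 := by
  rw [conjTranspose_submatrix, ← submatrix_mul _ _ _ _ _ Function.bijective_id, hU,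
    submatrix_one f hf]

theorem submatrix_mul_conjTranspose_submatrix [Semiring R] [StarRing R] [Fintype μ] [Fintype ρ]
    [DecidableEq ρ] (U : Matrix κ ρ R) {f : μ → ρ} (hf : f.Injective) :
    U.submatrix id f * (U.submatrix id f)ᴴ =
      U * diagonal ((Set.range f).indicator (1 : ρ → R)) * Uᴴ := by
  classical
  ext i k
  rw [mul_apply, mul_apply]
  simp only [mul_diagonal, submatrix_apply, conjTranspose_apply, id]
  refine Fintype.sum_of_injective f hf _ _ (fun l hl => ?_) fun j => ?_
  · rw [Set.indicator_of_notMem hl, mul_zero, zero_mul]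
  · rw [Set.indicator_of_mem (Set.mem_range_self j), Pi.one_apply, mul_one]

theorem mul_eq_submatrix_mul_diagonal [Semiring R] [Fintype ι] [Fintype ρ] [DecidableEq ι]
    [DecidableEq ρ] (U : Matrix κ ι R) {S : Matrix ι ρ R} {σ : ρ → R} {e : ρ → ι}
    (hS : ∀ i j, S i j = if i = e j then σ j else 0) :
    U * S = U.submatrix id e * diagonal σ := by
  ext i j
  rw [mul_diagonal]
  simp [mul_apply, hS]

end Matrix

section OperatorNorm

open scoped Matrix.Norms.L2Operator

theorem vnorm_eq_norm {ι : Type*} [Fintype ι] (x : ι → ℝ) : vnorm x = ‖WithLp.toLp 2 x‖ := by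
  simp only [vnorm, EuclideanSpace.norm_eq, Real.norm_eq_abs, sq_abs]

theorem specNorm_eq_norm {ι κ : Type*} [Fintype ι] [Fintype κ] [DecidableEq κ]
    (A : Matrix ι κ ℝ) : specNorm A = ‖A‖ := rfl

theorem vnorm_mulVec_le {ι κ : Type*} [Fintype ι] [Fintype κ] [DecidableEq κ]
    (A : Matrix ι κ ℝ) (x : κ → ℝ) : vnorm (A *ᵥ x) ≤ ‖A‖ * vnorm x := by
  simp only [vnorm_eq_norm]
  exact A.l2_opNorm_mulVec (WithLp.toLp 2 x)

variable {𝕜 : Type*} [RCLike 𝕜] {ι κ μ : Type*} [Fintype ι] [Fintype κ] [Fintype μ]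

section Polynomial

open Polynomial

variable [DecidableEq ι]

theorem aeval_diagonal_ofReal (d : ι → ℝ) (f : ℝ[X]) :
    aeval (diagonal (RCLike.ofReal ∘ d : ι → 𝕜)) f =
      diagonal (RCLike.ofReal ∘ fun i => f.eval (d i)) := by
  refine (aeval_algHom_apply (diagonalAlgHom (n := ι) (α := 𝕜) ℝ) (RCLike.ofReal ∘ d) f).trans
    (congrArg diagonal (funext fun i => ?_))
  rw [aeval_pi_apply₂]
  exact aeval_algebraMap_apply_eq_algebraMap_eval (d i) f

theorem norm_aeval_le_of_isHermitian {A : Matrix ι ι 𝕜} (hA : A.IsHermitian) (f : ℝ[X]) {c : ℝ}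
    (hf : ∀ t, |t| ≤ ‖A‖ → |f.eval t| ≤ c) : ‖aeval A f‖ ≤ c := by
  have hc : 0 ≤ c := (abs_nonneg _).trans (hf 0 (by simp))
  set φ := Unitary.conjStarAlgAut ℝ (Matrix ι ι 𝕜) hA.eigenvectorUnitary
  have hφ (D : Matrix ι ι 𝕜) : ‖φ D‖ = ‖D‖ := by
    rw [Unitary.conjStarAlgAut_apply, ← Unitary.coe_star, CStarRing.norm_mul_coe_unitary,
      CStarRing.norm_coe_unitary_mul]
  have hspec : φ (diagonal (RCLike.ofReal ∘ hA.eigenvalues)) = A := hA.spectral_theorem.symm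
  have heig (i : ι) : |hA.eigenvalues i| ≤ ‖A‖ := by
    have hnorm := hφ (diagonal (RCLike.ofReal ∘ hA.eigenvalues))
    rw [hspec, l2_opNorm_diagonal] at hnorm
    simpa [hnorm] using norm_le_pi_norm (RCLike.ofReal ∘ hA.eigenvalues : ι → 𝕜) i
  have haeval : φ (diagonal (RCLike.ofReal ∘ fun i => f.eval (hA.eigenvalues i))) = aeval A f := by
    rw [← aeval_diagonal_ofReal, ← aeval_algHom_apply, hspec]
  rw [← haeval, hφ, l2_opNorm_diagonal, pi_norm_le_iff_of_nonneg hc]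
  intro i
  simpa using hf _ (heig i)

end Polynomial

theorem norm_le_one_of_conjTranspose_mul_self_eq_one [DecidableEq κ] {Q : Matrix ι κ 𝕜}
    (hQ : Qᴴ * Q = 1) : ‖Q‖ ≤ 1 := by
  have hone : ‖(1 : Matrix κ κ 𝕜)‖ ≤ 1 := IsStarProjection.norm_le _ (.one _)
  rw [← hQ, l2_opNorm_conjTranspose_mul_self] at hone
  exact abs_le_one_iff_mul_self_le_one.mpr hone |>.trans' (le_abs_self _)

theorem norm_sq_toLp_sumElim (x : ι → 𝕜) (y : κ → 𝕜) :
    ‖WithLp.toLp 2 (Sum.elim x y)‖ ^ 2 = ‖WithLp.toLp 2 x‖ ^ 2 + ‖WithLp.toLp 2 y‖ ^ 2 := by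
  simp [EuclideanSpace.norm_sq_eq]

theorem norm_fromBlocks_zero_le {ι' κ' : Type*} [Fintype ι'] [Fintype κ'] [DecidableEq ι']
    [DecidableEq κ'] (C : Matrix ι κ' 𝕜) (D : Matrix κ ι' 𝕜) :
    ‖fromBlocks 0 C D 0‖ ≤ max ‖C‖ ‖D‖ := by
  refine ContinuousLinearMap.opNorm_le_bound _ (by positivity) fun z => ?_
  obtain ⟨x, y, rfl⟩ : ∃ x y, z = WithLp.toLp 2 (Sum.elim x y) :=
    ⟨z.ofLp ∘ Sum.inl, z.ofLp ∘ Sum.inr, by rw [Sum.elim_comp_inl_inr]⟩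
  have hmul : fromBlocks 0 C D 0 *ᵥ Sum.elim x y = Sum.elim (C *ᵥ y) (D *ᵥ x) := by
    simp [fromBlocks_mulVec]
  have hC : ‖WithLp.toLp 2 (C *ᵥ y)‖ ≤ max ‖C‖ ‖D‖ * ‖WithLp.toLp 2 y‖ :=
    (C.l2_opNorm_mulVec (WithLp.toLp 2 y)).trans (by gcongr; exact le_max_left _ _)
  have hD : ‖WithLp.toLp 2 (D *ᵥ x)‖ ≤ max ‖C‖ ‖D‖ * ‖WithLp.toLp 2 x‖ :=
    (D.l2_opNorm_mulVec (WithLp.toLp 2 x)).trans (by gcongr; exact le_max_right _ _)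
  refine le_of_sq_le_sq ?_ (by positivity)
  calc ‖WithLp.toLp 2 (fromBlocks 0 C D 0 *ᵥ Sum.elim x y)‖ ^ 2
      = ‖WithLp.toLp 2 (C *ᵥ y)‖ ^ 2 + ‖WithLp.toLp 2 (D *ᵥ x)‖ ^ 2 := by
        rw [hmul, norm_sq_toLp_sumElim]
    _ ≤ (max ‖C‖ ‖D‖ * ‖WithLp.toLp 2 y‖) ^ 2 + (max ‖C‖ ‖D‖ * ‖WithLp.toLp 2 x‖) ^ 2 := by
        gcongr
    _ = (max ‖C‖ ‖D‖ * ‖WithLp.toLp 2 (Sum.elim x y)‖) ^ 2 := by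
        simp only [mul_pow, norm_sq_toLp_sumElim]
        ring

theorem norm_mul_mul_le_deflation_add {ν ι' κ' : Type*} [Fintype ν] [Fintype ι'] [Fintype κ']
    [DecidableEq ι] [DecidableEq κ] [DecidableEq μ] [DecidableEq ν] [DecidableEq κ']
    (A : Matrix ι κ 𝕜) {X : Matrix ι μ 𝕜} {Y : Matrix κ ν 𝕜} (hX : Xᴴ * X = 1) (hY : Yᴴ * Y = 1)
    {P : Matrix ι' ι 𝕜} {Q : Matrix κ κ' 𝕜} (hP : ‖P‖ ≤ 1) (hQ : ‖Q‖ ≤ 1) :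
    ‖P * A * Q‖ ≤ ‖A - X * Xᴴ * A * (Y * Yᴴ)‖ + ‖A‖ * (‖P * X‖ * ‖Qᴴ * Y‖) := by
  have hX' : ‖Xᴴ‖ ≤ 1 :=
    (l2_opNorm_conjTranspose X).trans_le (norm_le_one_of_conjTranspose_mul_self_eq_one hX)
  have hY' : ‖Y‖ ≤ 1 := norm_le_one_of_conjTranspose_mul_self_eq_one hY
  have hYQ : ‖Yᴴ * Q‖ = ‖Qᴴ * Y‖ := by
    rw [← l2_opNorm_conjTranspose, conjTranspose_mul, conjTranspose_conjTranspose]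
  have hsplit : P * A * Q =
      P * (A - X * Xᴴ * A * (Y * Yᴴ)) * Q + P * X * (Xᴴ * A * Y) * (Yᴴ * Q) := by
    simp only [Matrix.mul_sub, Matrix.sub_mul, Matrix.mul_assoc, sub_add_cancel]
  have hdefl : ‖P * (A - X * Xᴴ * A * (Y * Yᴴ)) * Q‖ ≤ ‖A - X * Xᴴ * A * (Y * Yᴴ)‖ := by
    grw [l2_opNorm_mul, l2_opNorm_mul, hP, hQ, one_mul, mul_one]
  have hcompr : ‖P * X * (Xᴴ * A * Y) * (Yᴴ * Q)‖ ≤ ‖A‖ * (‖P * X‖ * ‖Qᴴ * Y‖) := by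
    grw [l2_opNorm_mul, l2_opNorm_mul, l2_opNorm_mul _ Y, l2_opNorm_mul Xᴴ, hX', hY', one_mul,
      mul_one, hYQ]
    exact (by ring : ‖P * X‖ * ‖A‖ * ‖Qᴴ * Y‖ = ‖A‖ * (‖P * X‖ * ‖Qᴴ * Y‖)).le
  rw [hsplit]
  exact norm_add_le_of_le hdefl hcompr

theorem norm_deflation_le [Fintype ρ] [DecidableEq κ] [DecidableEq ρ] {A : Matrix ι κ 𝕜}
    {U : Matrix ι ρ 𝕜} {V : Matrix κ ρ 𝕜} {σ : ρ → 𝕜} (hU : Uᴴ * U = 1) (hV : Vᴴ * V = 1)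
    (hA : A = U * diagonal σ * Vᴴ) {f : μ → ρ} (hf : f.Injective) {s : ℝ} (hs : 0 ≤ s)
    (hσ : ∀ i ∉ Set.range f, ‖σ i‖ ≤ s) :
    ‖A - U.submatrix id f * (U.submatrix id f)ᴴ * A *
      (V.submatrix id f * (V.submatrix id f)ᴴ)‖ ≤ s := by
  set χ : ρ → 𝕜 := (Set.range f).indicator 1
  have htail : A - U.submatrix id f * (U.submatrix id f)ᴴ * A *
      (V.submatrix id f * (V.submatrix id f)ᴴ) = U * diagonal (σ - χ * σ * χ) * Vᴴ := by
    calc _ = U * diagonal σ * Vᴴ - U * diagonal χ * (Uᴴ * U) * diagonal σ * (Vᴴ * V) *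
          diagonal χ * Vᴴ := by
          simp only [submatrix_mul_conjTranspose_submatrix _ hf, hA, Matrix.mul_assoc, χ]
      _ = U * (diagonal σ - diagonal χ * diagonal σ * diagonal χ) * Vᴴ := by
          simp only [hU, hV, Matrix.mul_one, Matrix.mul_sub, Matrix.sub_mul, Matrix.mul_assoc]
      _ = U * diagonal (σ - χ * σ * χ) * Vᴴ := by
          simp only [diagonal_mul_diagonal, diagonal_sub]; rfl
  have hentry : ‖σ - χ * σ * χ‖ ≤ s := by
    refine (pi_norm_le_iff_of_nonneg hs).mpr fun i => ?_
    by_cases hi : i ∈ Set.range f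
    · simpa [χ, Set.indicator_of_mem hi] using hs
    · simpa [χ, Set.indicator_of_notMem hi] using hσ i hi
  grw [htail, l2_opNorm_mul, l2_opNorm_mul, norm_le_one_of_conjTranspose_mul_self_eq_one hU,
    l2_opNorm_conjTranspose, norm_le_one_of_conjTranspose_mul_self_eq_one hV, l2_opNorm_diagonal,
    hentry, one_mul, mul_one]

end OperatorNorm

section Krylov

open Polynomial

open scoped Matrix.Norms.L2Operator

variable {ι : Type*} [Fintype ι] [DecidableEq ι] {r : ι → ℝ} {j : ℕ}

theorem aeval_mulVec_mem_krylov (B : Matrix ι ι ℝ) {p : ℝ[X]} (hp : p.degree < j) :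
    aeval B p *ᵥ r ∈ Krylov B r j := by
  rw [aeval_eq_sum_range, sum_mulVec]
  refine Submodule.sum_mem _ fun i _ => ?_
  rw [smul_mulVec]
  rcases lt_or_ge i j with hij | hij
  · exact Submodule.smul_mem _ _ (Submodule.subset_span ⟨i, hij, rfl⟩)
  · rw [coeff_eq_zero_of_degree_lt (hp.trans_le (Nat.cast_le.mpr hij)), zero_smul]
    exact Submodule.zero_mem _

theorem exists_mem_krylov_mulVec_add_eq_aeval_mulVec (B : Matrix ι ι ℝ) {p : ℝ[X]}
    (hdeg : p.natDegree ≤ j) (hp : p.eval 0 = 1) :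
    ∃ w ∈ Krylov B r j, B *ᵥ w + r = aeval B p *ᵥ r := by
  have hp0 : p ≠ 0 := by
    rintro rfl
    simp at hp
  have haeval : aeval B p = B * aeval B p.divX + 1 := by
    conv_lhs => rw [← divX_mul_X_add p, mul_comm, coeff_zero_eq_eval_zero, hp]
    simp only [map_add, map_mul, aeval_X, map_one]
  refine ⟨aeval B p.divX *ᵥ r, aeval_mulVec_mem_krylov B ?_, ?_⟩
  · exact (degree_divX_lt hp0).trans_le (natDegree_le_iff_degree_le.mp hdeg)
  · rw [haeval, add_mulVec, one_mulVec, mulVec_mulVec]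

theorem aeval_sub_smul_comp_mulVec {R : Type*} [CommRing R] {G P : Matrix ι ι R} {r : ι → R}
    (hPG : P * G = G) (hr : P *ᵥ r = r) (τ : R) (f : R[X]) :
    aeval (G - τ • P) (f.comp (X + C τ)) *ᵥ r = aeval G f *ᵥ r := by
  have hfix (n : ℕ) : P *ᵥ (G ^ n *ᵥ r) = G ^ n *ᵥ r := by
    cases n with
    | zero => simpa using hr
    | succ n => rw [mulVec_mulVec, pow_succ', ← Matrix.mul_assoc, hPG]
  have hpow (n : ℕ) : (G - τ • P + algebraMap R _ τ) ^ n *ᵥ r = G ^ n *ᵥ r := by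
    induction n with
    | zero => simp only [pow_zero]
    | succ n ih =>
      rw [pow_succ', ← mulVec_mulVec, ih, add_mulVec, sub_mulVec, smul_mulVec, hfix,
        Algebra.algebraMap_eq_smul_one, smul_mulVec, one_mulVec, sub_add_cancel, mulVec_mulVec,
        ← pow_succ']
  rw [aeval_comp, map_add, aeval_X, aeval_C]
  simp only [aeval_eq_sum_range, sum_mulVec, smul_mulVec, hpow]

theorem exists_mem_krylov_sub_smul_vnorm_mulVec_add_le {G P : Matrix ι ι ℝ} (hG : G.IsHermitian)
    (hPG : P * G = G) (hr : P *ᵥ r = r) {τ g : ℝ} (hGg : ‖G‖ ≤ g) (hgτ : g < τ) (j : ℕ) :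
    ∃ w ∈ Krylov (G - τ • P) r j, vnorm ((G - τ • P) *ᵥ w + r) ≤
      2 * chebyshevRate ((τ + g) / (τ - g)) ^ j * vnorm r := by
  obtain ⟨f, hdeg, hfτ, hf⟩ :=
    exists_polynomial_eval_eq_one_abs_eval_le ((norm_nonneg G).trans hGg) hgτ j
  obtain ⟨w, hw, hres⟩ := exists_mem_krylov_mulVec_add_eq_aeval_mulVec (r := r) (j := j)
    (G - τ • P) (p := f.comp (X + C τ)) (by simpa [natDegree_comp] using hdeg)
    (by simpa [eval_comp] using hfτ)
  refine ⟨w, hw, ?_⟩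
  rw [hres, aeval_sub_smul_comp_mulVec hPG hr]
  refine (vnorm_mulVec_le _ r).trans (mul_le_mul_of_nonneg_right ?_ (Real.sqrt_nonneg _))
  exact norm_aeval_le_of_isHermitian hG f fun t ht => hf t (ht.trans hGg)

end Krylov

section JacobiDavidson

open scoped Matrix.Norms.L2Operator

variable {ι κ : Type*} [Fintype ι] [Fintype κ] [DecidableEq ι] [DecidableEq κ]

theorem fromBlocks_mul_mul_fromBlocks_eq_sub_smul {R : Type*} [CommRing R] (A : Matrix ι κ R)
    (A' : Matrix κ ι R) (τ : R) {P : Matrix ι ι R} {Q : Matrix κ κ R} (hP : P * P = P)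
    (hQ : Q * Q = Q) :
    fromBlocks P 0 0 Q * fromBlocks ((-τ) • 1) A A' ((-τ) • 1) * fromBlocks P 0 0 Q =
      fromBlocks 0 (P * A * Q) (Q * A' * P) 0 - τ • fromBlocks P 0 0 Q := by
  simp [fromBlocks_multiply, fromBlocks_smul, sub_eq_add_neg, fromBlocks_neg, fromBlocks_add,
    hP, hQ]

theorem exists_mem_krylov_fromBlocks_vnorm_mulVec_add_le {P : Matrix ι ι ℝ} {Q : Matrix κ κ ℝ}
    (hP : IsStarProjection P) (hQ : IsStarProjection Q) {A : Matrix ι κ ℝ} {τ g : ℝ}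
    (hA : ‖P * A * Q‖ ≤ g) (hgτ : g < τ) {r : ι ⊕ κ → ℝ} (hr : fromBlocks P 0 0 Q *ᵥ r = r)
    {B : Matrix (ι ⊕ κ) (ι ⊕ κ) ℝ}
    (hB : B = fromBlocks P 0 0 Q * fromBlocks ((-τ) • 1) A Aᴴ ((-τ) • 1) * fromBlocks P 0 0 Q)
    (j : ℕ) :
    ∃ w ∈ Krylov B r j,
      vnorm (B *ᵥ w + r) ≤ 2 * chebyshevRate ((τ + g) / (τ - g)) ^ j * vnorm r := by
  have hP' : P * P = P := hP.isIdempotentElem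
  have hQ' : Q * Q = Q := hQ.isIdempotentElem
  have hPH : Pᴴ = P := hP.isSelfAdjoint
  have hQH : Qᴴ = Q := hQ.isSelfAdjoint
  have hadj : Q * Aᴴ * P = (P * A * Q)ᴴ := by
    simp only [conjTranspose_mul, hPH, hQH, Matrix.mul_assoc]
  rw [hB, fromBlocks_mul_mul_fromBlocks_eq_sub_smul A Aᴴ τ hP' hQ', hadj]
  refine exists_mem_krylov_sub_smul_vnorm_mulVec_add_le ?_ ?_ hr ?_ hgτ j
  · rw [IsHermitian, fromBlocks_conjTranspose, conjTranspose_conjTranspose, conjTranspose_zero,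
      conjTranspose_zero]
  · simp only [fromBlocks_multiply, ← hadj, Matrix.zero_mul, Matrix.mul_zero, zero_add, add_zero,
      ← Matrix.mul_assoc, hP', hQ']
  · refine (norm_fromBlocks_zero_le _ _).trans (max_le hA ?_)
    rwa [l2_opNorm_conjTranspose]

theorem exists_mem_krylov_vnorm_mulVec_add_le_of_deflation {μ ν μ' ν' : Type*} [Fintype μ]
    [Fintype ν] [Fintype μ'] [Fintype ν'] [DecidableEq μ] [DecidableEq ν] [DecidableEq μ']
    [DecidableEq ν'] {A : Matrix ι κ ℝ} {Um : Matrix ι μ ℝ} {Vm : Matrix κ ν ℝ}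
    {Ut : Matrix ι μ' ℝ} {Vt : Matrix κ ν' ℝ} (hUm : Umᴴ * Um = 1) (hVm : Vmᴴ * Vm = 1)
    (hUt : Utᴴ * Ut = 1) (hVt : Vtᴴ * Vt = 1) {s τ δ : ℝ}
    (hs : ‖A - Um * Umᴴ * A * (Vm * Vmᴴ)‖ ≤ s)
    (hδ : δ = ‖A‖ * (‖(1 - Ut * Utᴴ) * Um‖ + ‖(1 - Vt * Vtᴴ) * Vm‖) ^ 2) (hδτ : δ < τ - s)
    {B P Bm : Matrix (ι ⊕ κ) (ι ⊕ κ) ℝ} (hB : B = fromBlocks ((-τ) • 1) A Aᴴ ((-τ) • 1))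
    (hP : P = fromBlocks (1 - Ut * Utᴴ) 0 0 (1 - Vt * Vtᴴ)) (hBm : Bm = P * B * P)
    {r : ι ⊕ κ → ℝ} (hr : P *ᵥ r = r) (j : ℕ) :
    ∃ w ∈ Krylov Bm r j,
      vnorm (Bm *ᵥ w + r) ≤ 2 * chebyshevRate ((τ + s + δ) / (τ - s - δ)) ^ j * vnorm r := by
  have hPt := isStarProjection_one_sub_mul_conjTranspose hUt
  have hQt := isStarProjection_one_sub_mul_conjTranspose hVt
  have hQH : (1 - Vt * Vtᴴ)ᴴ = 1 - Vt * Vtᴴ := hQt.isSelfAdjoint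
  have hsin : ‖(1 - Ut * Utᴴ) * Um‖ * ‖(1 - Vt * Vtᴴ) * Vm‖ ≤
      (‖(1 - Ut * Utᴴ) * Um‖ + ‖(1 - Vt * Vtᴴ) * Vm‖) ^ 2 := by
    nlinarith [norm_nonneg ((1 - Ut * Utᴴ) * Um), norm_nonneg ((1 - Vt * Vtᴴ) * Vm)]
  have hPAQ : ‖(1 - Ut * Utᴴ) * A * (1 - Vt * Vtᴴ)‖ ≤ s + δ := by
    grw [norm_mul_mul_le_deflation_add A hUm hVm hPt.norm_le hQt.norm_le, hs, hQH, hsin, hδ]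
  subst hP hB
  rw [add_assoc, sub_sub]
  exact exists_mem_krylov_fromBlocks_vnorm_mulVec_add_le hPt hQt hPAQ (by linarith) hr hBm j

theorem minres_bound_precond_approx_largest_general {μ μ' ν' : Type*} [Fintype μ] [Fintype μ']
    [Fintype ν'] [DecidableEq μ] [DecidableEq μ'] [DecidableEq ν'] (e : κ ↪ ι) (f : μ ↪ κ)
    {A S : Matrix ι κ ℝ} {U : Matrix ι ι ℝ} {V : Matrix κ κ ℝ} (hU : Uᵀ * U = 1)
    (hV : Vᵀ * V = 1) {σ : κ → ℝ} (hS : ∀ i j, S i j = if i = e j then σ j else 0)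
    (hA : A = U * S * Vᵀ) {s : ℝ} (hs : 0 ≤ s) (hσ : ∀ i ∉ Set.range f, |σ i| ≤ s)
    {Um : Matrix ι μ ℝ} (hUm : Um = U.submatrix id (e ∘ f)) {Vm : Matrix κ μ ℝ}
    (hVm : Vm = V.submatrix id f) {Ut : Matrix ι μ' ℝ} {Vt : Matrix κ ν' ℝ} (hUt : Utᵀ * Ut = 1)
    (hVt : Vtᵀ * Vt = 1) {τ δ : ℝ}
    (hδ : δ = specNorm A *
      (specNorm ((1 - Ut * Utᵀ) * Um) + specNorm ((1 - Vt * Vtᵀ) * Vm)) ^ 2)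
    (hδτ : δ < τ - s) {B P Bm : Matrix (ι ⊕ κ) (ι ⊕ κ) ℝ}
    (hB : B = fromBlocks ((-τ) • 1) A Aᵀ ((-τ) • 1))
    (hP : P = fromBlocks (1 - Ut * Utᵀ) 0 0 (1 - Vt * Vtᵀ)) (hBm : Bm = P * B * P)
    {r : ι ⊕ κ → ℝ} (hr : P *ᵥ r = r) (j : ℕ) :
    ∃ w ∈ Krylov Bm r j,
      vnorm (Bm *ᵥ w + r) ≤
        2 * (1 - 2 / (1 + Real.sqrt ((τ + s + δ) / (τ - s - δ)))) ^ j * vnorm r := by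
  simp only [← conjTranspose_eq_transpose_of_trivial, specNorm_eq_norm] at *
  have hthin := conjTranspose_submatrix_mul_submatrix hU e.injective
  rw [mul_eq_submatrix_mul_diagonal U hS] at hA
  have hdefl := norm_deflation_le hthin hV hA f.injective hs hσ
  subst hUm hVm
  exact exists_mem_krylov_vnorm_mulVec_add_le_of_deflation
    (conjTranspose_submatrix_mul_submatrix hthin f.injective)
    (conjTranspose_submatrix_mul_submatrix hV f.injective) hUt hVt hdefl hδ hδτ hB hP hBm hr j

end JacobiDavidson

/-- Theorem 4.4(i). MINRES bound for the preconditioned JDSVD correction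
equation with approximate singular subspaces, in the case `τ > (σ_max + σ_max,m+1)/2`. -/
theorem minres_bound_precond_approx_largest {M N m : ℕ} (hN : 2 ≤ N) (hMN : N ≤ M)
    (hm : 1 ≤ m) (hmN : m < N)
    (A : Matrix (Fin M) (Fin N) ℝ)
    (U : Matrix (Fin M) (Fin M) ℝ) (V : Matrix (Fin N) (Fin N) ℝ)
    (hU : Uᵀ * U = 1) (hV : Vᵀ * V = 1)
    (σ : Fin N → ℝ) (hσ : ∀ i, 0 ≤ σ i)
    (S : Matrix (Fin M) (Fin N) ℝ)
    (hS : ∀ i j, S i j = if (i : ℕ) = (j : ℕ) then σ j else 0)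
    (hA : A = U * S * Vᵀ)
    (τ : ℝ) (hτ0 : 0 ≤ τ)
    (hclosest : ∀ i j : Fin N, (i : ℕ) < m → m ≤ (j : ℕ) → |σ i - τ| ≤ |σ j - τ|)
    (σmax σmaxm1 : ℝ)
    (hσmax : IsGreatest (Set.range σ) σmax)
    (hσmaxm1 : IsGreatest (σ '' {i : Fin N | m ≤ (i : ℕ)}) σmaxm1)
    (hτ : (σmax + σmaxm1) / 2 < τ)
    (Um : Matrix (Fin M) (Fin m) ℝ)
    (hUm : ∀ i j, Um i j = U i ⟨(j : ℕ), by have := j.isLt; omega⟩)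
    (Vm : Matrix (Fin N) (Fin m) ℝ)
    (hVm : ∀ i j, Vm i j = V i ⟨(j : ℕ), by have := j.isLt; omega⟩)
    (Ut : Matrix (Fin M) (Fin m) ℝ) (Vt : Matrix (Fin N) (Fin m) ℝ)
    (hUt : Utᵀ * Ut = 1) (hVt : Vtᵀ * Vt = 1)
    (δ : ℝ)
    (hδ : δ = specNorm A *
      (specNorm ((1 - Ut * Utᵀ) * Um) + specNorm ((1 - Vt * Vtᵀ) * Vm)) ^ 2)
    (hδsmall : δ < τ - σmaxm1)
    (B P Bm : Matrix (Fin M ⊕ Fin N) (Fin M ⊕ Fin N) ℝ)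
    (hB : B = Matrix.fromBlocks ((-τ) • 1) A Aᵀ ((-τ) • 1))
    (hP : P = Matrix.fromBlocks (1 - Ut * Utᵀ) 0 0 (1 - Vt * Vtᵀ))
    (hBm : Bm = P * B * P)
    (r : Fin M ⊕ Fin N → ℝ) (hr : P *ᵥ r = r) :
    ∀ j : ℕ, ∃ w ∈ Krylov Bm r j,
      vnorm (Bm *ᵥ w + r) ≤
        2 * (1 - 2 / (1 + Real.sqrt ((τ + σmaxm1 + δ) / (τ - σmaxm1 - δ)))) ^ j * vnorm r := by
  have hs : 0 ≤ σmaxm1 := by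
    obtain ⟨i, -, rfl⟩ := hσmaxm1.1
    exact hσ i
  have htail (i : Fin N) (hi : i ∉ Set.range (Fin.castLEEmb hmN.le)) : |σ i| ≤ σmaxm1 := by
    rw [abs_of_nonneg (hσ i)]
    exact hσmaxm1.2 ⟨i, by simpa using hi, rfl⟩
  exact minres_bound_precond_approx_largest_general (Fin.castLEEmb hMN) (Fin.castLEEmb hmN.le)
    hU hV (by simpa [Fin.ext_iff] using hS) hA hs htail (Matrix.ext hUm) (Matrix.ext hVm) hUt hVt
    hδ hδsmall hB hP hBm hr
end
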